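/- arXiv:1411.5663 — 3 statements merged into one kernel-verified Lean document; each statement's English description precedes it below -/
import Mathlib

section
/- (Pointwise engine of the formula relating ∇ω to the intrinsic endomorphism.) Let φ ∈ Δ be a unit spinor. Then for all v, y, z ∈ ℝ^6: ⟨y·(v·φ), z·(j(φ))⟩ − ⟨y·φ, z·(v·(j(φ)))⟩ = −2·ψ_φ⁻(v, y, z). -/
open RealInnerProductSpace

noncomputable section

/-- The spin representation space Δ = ℝ^8. -/
abbrev Δ : Type := EuclideanSpace ℝ (Fin 8)

/-- The standard skew endomorphism E_{ij} of ℝ^8: u_i ↦ u_j, u_j ↦ -u_i, others ↦ 0. -/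
def E (i j : Fin 8) : Δ →ₗ[ℝ] Δ where
  toFun v := v i • EuclideanSpace.single j (1 : ℝ) - v j • EuclideanSpace.single i (1 : ℝ)
  map_add' x y := by
    simp only [PiLp.add_apply, add_smul]
    module
  map_smul' c x := by
    simp only [PiLp.smul_apply, smul_eq_mul, RingHom.id_apply, mul_smul]
    module

/-- The seven Clifford endomorphisms e_1, …, e_7 (indexed 0,…,6). -/
def cliff : Fin 7 → (Δ →ₗ[ℝ] Δ) :=
  ![  E 0 7 + E 1 6 - E 2 5 - E 3 4,
    - E 0 6 + E 1 7 + E 2 4 - E 3 5,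
    - E 0 5 + E 1 4 - E 2 7 + E 3 6,
    - E 0 4 - E 1 5 - E 2 6 - E 3 7,
    - E 0 2 - E 1 3 + E 4 6 + E 5 7,
      E 0 3 - E 1 2 - E 4 7 + E 5 6,
      E 0 1 - E 2 3 - E 4 5 + E 6 7]

/-- j = e_1 ∘ e_2 ∘ e_3 ∘ e_4 ∘ e_5 ∘ e_6. -/
def jmap : Δ →ₗ[ℝ] Δ :=
  cliff 0 ∘ₗ cliff 1 ∘ₗ cliff 2 ∘ₗ cliff 3 ∘ₗ cliff 4 ∘ₗ cliff 5

/-- Clifford multiplication of a vector x ∈ ℝ^6 on a spinor. -/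
def cm6 (x : EuclideanSpace ℝ (Fin 6)) (φ : Δ) : Δ :=
  ∑ i : Fin 6, x i • cliff i.castSucc φ

/-- Clifford multiplication of a vector x ∈ ℝ^7 on a spinor. -/
def cm7 (x : EuclideanSpace ℝ (Fin 7)) (φ : Δ) : Δ :=
  ∑ i : Fin 7, x i • cliff i φ


/-- Standard basis vector of ℝ^6. -/
def v6 (i : Fin 6) : EuclideanSpace ℝ (Fin 6) := EuclideanSpace.single i (1 : ℝ)

/-- The 3-form ψ_φ(x,y,z) = -⟨x·y·z·φ, φ⟩ on ℝ^6. -/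
def psiP (φ : Δ) (x y z : EuclideanSpace ℝ (Fin 6)) : ℝ :=
  -⟪cm6 x (cm6 y (cm6 z φ)), φ⟫

/-- The 3-form ψ_φ⁻(x,y,z) = -⟨x·y·z·φ, j(φ)⟩ on ℝ^6. -/
def psiM (φ : Δ) (x y z : EuclideanSpace ℝ (Fin 6)) : ℝ :=
  -⟪cm6 x (cm6 y (cm6 z φ)), jmap φ⟫

/-- Action of a trilinear form on ℝ^6 on a spinor:
τ·χ := Σ_{i<j<k} τ(v_i,v_j,v_k) e_i(e_j(e_k(χ))). -/
def tact6 (τ : EuclideanSpace ℝ (Fin 6) → EuclideanSpace ℝ (Fin 6) →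
    EuclideanSpace ℝ (Fin 6) → ℝ) (χ : Δ) : Δ :=
  ∑ i : Fin 6, ∑ j : Fin 6, ∑ k : Fin 6,
    if i < j ∧ j < k then
      τ (v6 i) (v6 j) (v6 k) • cliff i.castSucc (cliff j.castSucc (cliff k.castSucc χ))
    else 0

/-- Action of a bilinear form on ℝ^6 on a spinor:
σ·χ := Σ_{i<j} σ(v_i,v_j) e_i(e_j(χ)). -/
def bact6 (σ : EuclideanSpace ℝ (Fin 6) → EuclideanSpace ℝ (Fin 6) → ℝ) (χ : Δ) : Δ :=
  ∑ i : Fin 6, ∑ j : Fin 6,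
    if i < j then σ (v6 i) (v6 j) • cliff i.castSucc (cliff j.castSucc χ) else 0

set_option maxHeartbeats 4000000 in
lemma cliff_coords (φ : Δ) :
    cliff 0 φ = !₂[-φ 7, -φ 6, φ 5, φ 4, -φ 3, -φ 2, φ 1, φ 0] ∧
    cliff 1 φ = !₂[φ 6, -φ 7, -φ 4, φ 5, φ 2, -φ 3, -φ 0, φ 1] ∧
    cliff 2 φ = !₂[φ 5, -φ 4, φ 7, -φ 6, φ 1, -φ 0, φ 3, -φ 2] ∧
    cliff 3 φ = !₂[φ 4, φ 5, φ 6, φ 7, -φ 0, -φ 1, -φ 2, -φ 3] ∧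
    cliff 4 φ = !₂[φ 2, φ 3, -φ 0, -φ 1, -φ 6, -φ 7, φ 4, φ 5] ∧
    cliff 5 φ = !₂[-φ 3, φ 2, -φ 1, φ 0, φ 7, -φ 6, φ 5, -φ 4] := by
  refine ⟨?_, ?_, ?_, ?_, ?_, ?_⟩ <;> ext k <;> fin_cases k <;> simp [cliff, E]

lemma cm6_coords (x : EuclideanSpace ℝ (Fin 6)) (φ : Δ) :
    cm6 x φ = x 0 • cliff 0 φ + x 1 • cliff 1 φ + x 2 • cliff 2 φ + x 3 • cliff 3 φ
      + x 4 • cliff 4 φ + x 5 • cliff 5 φ := by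
  simp only [cm6, Fin.sum_univ_six]
  rfl

lemma cm6_add (x : EuclideanSpace ℝ (Fin 6)) (a b : Δ) :
    cm6 x (a + b) = cm6 x a + cm6 x b := by
  simp [cm6, Finset.sum_add_distrib]

lemma cm6_smul (x : EuclideanSpace ℝ (Fin 6)) (c : ℝ) (a : Δ) :
    cm6 x (c • a) = c • cm6 x a := by
  simp [cm6, Finset.smul_sum, smul_comm c]

lemma cm6_explicit (x : EuclideanSpace ℝ (Fin 6)) (φ : Δ) :
    cm6 x φ = !₂[
      -x 0 * φ 7 + x 1 * φ 6 + x 2 * φ 5 + x 3 * φ 4 + x 4 * φ 2 - x 5 * φ 3,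
      -x 0 * φ 6 - x 1 * φ 7 - x 2 * φ 4 + x 3 * φ 5 + x 4 * φ 3 + x 5 * φ 2,
      x 0 * φ 5 - x 1 * φ 4 + x 2 * φ 7 + x 3 * φ 6 - x 4 * φ 0 - x 5 * φ 1,
      x 0 * φ 4 + x 1 * φ 5 - x 2 * φ 6 + x 3 * φ 7 - x 4 * φ 1 + x 5 * φ 0,
      -x 0 * φ 3 + x 1 * φ 2 + x 2 * φ 1 - x 3 * φ 0 - x 4 * φ 6 + x 5 * φ 7,
      -x 0 * φ 2 - x 1 * φ 3 - x 2 * φ 0 - x 3 * φ 1 - x 4 * φ 7 - x 5 * φ 6,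
      x 0 * φ 1 - x 1 * φ 0 + x 2 * φ 3 - x 3 * φ 2 + x 4 * φ 4 + x 5 * φ 5,
      x 0 * φ 0 + x 1 * φ 1 - x 2 * φ 2 - x 3 * φ 3 + x 4 * φ 5 - x 5 * φ 4] := by
  obtain ⟨h0, h1, h2, h3, h4, h5⟩ := cliff_coords φ
  rw [cm6_coords, h0, h1, h2, h3, h4, h5]
  ext k
  fin_cases k <;> simp <;> ring

/-- Clifford multiplication is skew. -/
lemma cm6_skew (x : EuclideanSpace ℝ (Fin 6)) (a b : Δ) :
    ⟪cm6 x a, b⟫ = -⟪a, cm6 x b⟫ := by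
  rw [cm6_explicit, cm6_explicit]
  simp [PiLp.inner_apply, Fin.sum_univ_eight]
  ring

/-- The Clifford relation. -/
lemma cm6_rel (x y : EuclideanSpace ℝ (Fin 6)) (a : Δ) :
    cm6 x (cm6 y a) = (-1 : ℝ) • cm6 y (cm6 x a) + (-2 * ⟪x, y⟫) • a := by
  simp only [cm6_explicit]
  ext k
  fin_cases k <;> simp [PiLp.inner_apply, Fin.sum_univ_six] <;> ring

lemma jmap_coords (φ : Δ) :
    jmap φ = cliff 0 (cliff 1 (cliff 2 (cliff 3 (cliff 4 (cliff 5 φ))))) := by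
  simp only [jmap, LinearMap.comp_apply]

/-- Vectors times φ are orthogonal to j φ. -/
lemma cm6_jmap (x : EuclideanSpace ℝ (Fin 6)) (φ : Δ) : ⟪cm6 x φ, jmap φ⟫ = 0 := by
  rw [cm6_explicit, jmap_coords]
  rw [(cliff_coords φ).2.2.2.2.2, (cliff_coords _).2.2.2.2.1, (cliff_coords _).2.2.2.1,
    (cliff_coords _).2.2.1, (cliff_coords _).2.1, (cliff_coords _).1]
  simp [PiLp.inner_apply, Fin.sum_univ_eight]
  ring

/-- Pointwise engine of the formula relating ∇ω to the intrinsic endomorphism: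
⟨y·(v·φ), z·(j(φ))⟩ - ⟨y·φ, z·(v·(j(φ)))⟩ = -2 ψ_φ⁻(v,y,z). -/
theorem nabla_omega_engine (φ : Δ) (hφ : ⟪φ, φ⟫ = 1) :
    ∀ v y z : EuclideanSpace ℝ (Fin 6),
      ⟪cm6 y (cm6 v φ), cm6 z (jmap φ)⟫ - ⟪cm6 y φ, cm6 z (cm6 v (jmap φ))⟫ =
        -2 * psiM φ v y z := by
  intro v y z
  have e1 : ⟪cm6 y (cm6 v φ), cm6 z (jmap φ)⟫ = -⟪cm6 z (cm6 y (cm6 v φ)), jmap φ⟫ := by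
    rw [cm6_skew z, neg_neg]
  have e2 : ⟪cm6 y φ, cm6 z (cm6 v (jmap φ))⟫ = ⟪cm6 v (cm6 z (cm6 y φ)), jmap φ⟫ := by
    rw [cm6_skew v, cm6_skew z, neg_neg]
  rw [e1, e2, psiM, cm6_rel y v φ, cm6_add, cm6_smul, cm6_smul, cm6_rel z v (cm6 y φ),
    cm6_rel z y φ, cm6_add, cm6_smul, cm6_smul]
  simp only [inner_add_left, real_inner_smul_left, cm6_jmap]
  ring

end
end

section
/- For every unit spinor φ ∈ Δ, the eight vectors (φ, e_1(φ), e_2(φ), e_3(φ), e_4(φ), e_5(φ), e_6(φ), e_7(φ)) form an orthonormal basis of ℝ^8; in particular Δ = ℝφ ⊕ {x·φ : x ∈ ℝ^7} is an orthogonal direct sum. -/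
open RealInnerProductSpace

noncomputable section

lemma cliff_apply_0 (v : Δ) : cliff 0 v = !₂[-v 7, -v 6, v 5, v 4, -v 3, -v 2, v 1, v 0] := by
  ext i; fin_cases i <;> simp [cliff, E]

lemma cliff_apply_1 (v : Δ) : cliff 1 v = !₂[v 6, -v 7, -v 4, v 5, v 2, -v 3, -v 0, v 1] := by
  ext i; fin_cases i <;> simp [cliff, E]

lemma cliff_apply_2 (v : Δ) : cliff 2 v = !₂[v 5, -v 4, v 7, -v 6, v 1, -v 0, v 3, -v 2] := by
  ext i; fin_cases i <;> simp [cliff, E]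

lemma cliff_apply_3 (v : Δ) : cliff 3 v = !₂[v 4, v 5, v 6, v 7, -v 0, -v 1, -v 2, -v 3] := by
  ext i; fin_cases i <;> simp [cliff, E]

lemma cliff_apply_4 (v : Δ) : cliff 4 v = !₂[v 2, v 3, -v 0, -v 1, -v 6, -v 7, v 4, v 5] := by
  ext i; fin_cases i <;> simp [cliff, E]

lemma cliff_apply_5 (v : Δ) : cliff 5 v = !₂[-v 3, v 2, -v 1, v 0, v 7, -v 6, v 5, -v 4] := by
  ext i; fin_cases i <;> simp [cliff, E]

lemma cliff_apply_6 (v : Δ) : cliff 6 v = !₂[-v 1, v 0, v 3, -v 2, v 5, -v 4, -v 7, v 6] := by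
  ext i; fin_cases i <;> simp [cliff, E]

/-- For every unit spinor φ, the eight vectors (φ, e_1(φ), …, e_7(φ)) form an
orthonormal basis of ℝ^8. -/
theorem orthonormal_basis_from_unit_spinor_dim7 (φ : Δ) (hφ : ⟪φ, φ⟫ = 1) :
    Orthonormal ℝ
      ![φ, cliff 0 φ, cliff 1 φ, cliff 2 φ, cliff 3 φ, cliff 4 φ, cliff 5 φ, cliff 6 φ] ∧
    Submodule.span ℝ
      (Set.range
        ![φ, cliff 0 φ, cliff 1 φ, cliff 2 φ, cliff 3 φ, cliff 4 φ,
          cliff 5 φ, cliff 6 φ]) = ⊤ := by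
  have hsq : φ 0 * φ 0 + φ 1 * φ 1 + φ 2 * φ 2 + φ 3 * φ 3 + φ 4 * φ 4 + φ 5 * φ 5
      + φ 6 * φ 6 + φ 7 * φ 7 = 1 := by
    rw [← hφ, PiLp.inner_apply, Fin.sum_univ_eight]
    simp only [RCLike.inner_apply, conj_trivial]
  have ho : Orthonormal ℝ
      ![φ, cliff 0 φ, cliff 1 φ, cliff 2 φ, cliff 3 φ, cliff 4 φ, cliff 5 φ, cliff 6 φ] := by
    rw [orthonormal_iff_ite]
    intro i j
    rw [PiLp.inner_apply, Fin.sum_univ_eight]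
    simp only [RCLike.inner_apply, conj_trivial]
    rw [cliff_apply_0, cliff_apply_1, cliff_apply_2, cliff_apply_3, cliff_apply_4,
      cliff_apply_5, cliff_apply_6]
    fin_cases i <;> fin_cases j <;>
      simp <;>
      linarith [hsq]
  exact ⟨ho, ho.linearIndependent.span_eq_top_of_card_eq_finrank (by simp)⟩


end
end

section
/- (Pointwise form of the W_2 row of the G2 classification theorem.) Let φ ∈ Δ be a unit spinor and let S ∈ End(ℝ^7) be skew-adjoint and a derivation of the cross product, i.e. S(x×y) = S(x)×y + x×S(y) for all x, y ∈ ℝ^7 (so S lies in the Lie algebra g_2). Setting ν(x) := S(x)·φ, one has ν(x×y) = y·ν(x) − x·ν(y) + 2⟨y, S(x)⟩·φ for all x, y ∈ ℝ^7. -/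
open RealInnerProductSpace

noncomputable section

/-- Standard basis vector of ℝ^7. -/
def v7 (i : Fin 7) : EuclideanSpace ℝ (Fin 7) := EuclideanSpace.single i (1 : ℝ)

/-- The G₂ 3-form Φ_φ(x,y,z) = ⟨x·y·z·φ, φ⟩ on ℝ^7. -/
def PhiP (φ : Δ) (x y z : EuclideanSpace ℝ (Fin 7)) : ℝ :=
  ⟪cm7 x (cm7 y (cm7 z φ)), φ⟫

/-- Action of a trilinear form on ℝ^7 on a spinor:
τ·χ := Σ_{i<j<k} τ(v_i,v_j,v_k) e_i(e_j(e_k(χ))). -/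
def tact7 (τ : EuclideanSpace ℝ (Fin 7) → EuclideanSpace ℝ (Fin 7) →
    EuclideanSpace ℝ (Fin 7) → ℝ) (χ : Δ) : Δ :=
  ∑ i : Fin 7, ∑ j : Fin 7, ∑ k : Fin 7,
    if i < j ∧ j < k then
      τ (v7 i) (v7 j) (v7 k) • cliff i (cliff j (cliff k χ))
    else 0

/-- Action of a bilinear form on ℝ^7 on a spinor:
σ·χ := Σ_{i<j} σ(v_i,v_j) e_i(e_j(χ)). -/
def bact7 (σ : EuclideanSpace ℝ (Fin 7) → EuclideanSpace ℝ (Fin 7) → ℝ) (χ : Δ) : Δ :=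
  ∑ i : Fin 7, ∑ j : Fin 7,
    if i < j then σ (v7 i) (v7 j) • cliff i (cliff j χ) else 0


/-- The real inner product in coordinates. -/
lemma inner8 (a b : Δ) : ⟪a, b⟫ = ∑ i, a i * b i := by
  simp [PiLp.inner_apply, mul_comm]

lemma inner7 (a b : EuclideanSpace ℝ (Fin 7)) : ⟪a, b⟫ = ∑ i, a i * b i := by
  simp [PiLp.inner_apply, mul_comm]

/-- Clifford multiplication in coordinates. -/
lemma cm7_coord (x : EuclideanSpace ℝ (Fin 7)) (p : Δ) :
    cm7 x p = !₂[
      -x 0 * p 7 + x 1 * p 6 + x 2 * p 5 + x 3 * p 4 + x 4 * p 2 - x 5 * p 3 - x 6 * p 1,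
      -x 0 * p 6 - x 1 * p 7 - x 2 * p 4 + x 3 * p 5 + x 4 * p 3 + x 5 * p 2 + x 6 * p 0,
      x 0 * p 5 - x 1 * p 4 + x 2 * p 7 + x 3 * p 6 - x 4 * p 0 - x 5 * p 1 + x 6 * p 3,
      x 0 * p 4 + x 1 * p 5 - x 2 * p 6 + x 3 * p 7 - x 4 * p 1 + x 5 * p 0 - x 6 * p 2,
      -x 0 * p 3 + x 1 * p 2 + x 2 * p 1 - x 3 * p 0 - x 4 * p 6 + x 5 * p 7 + x 6 * p 5,
      -x 0 * p 2 - x 1 * p 3 - x 2 * p 0 - x 3 * p 1 - x 4 * p 7 - x 5 * p 6 - x 6 * p 4,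
      x 0 * p 1 - x 1 * p 0 + x 2 * p 3 - x 3 * p 2 + x 4 * p 4 + x 5 * p 5 - x 6 * p 7,
      x 0 * p 0 + x 1 * p 1 - x 2 * p 2 - x 3 * p 3 + x 4 * p 5 - x 5 * p 4 + x 6 * p 6] := by
  ext i
  fin_cases i <;> simp [cm7, cliff, E, Fin.sum_univ_succ, Fin.ext_iff] <;> ring

lemma cm7_add (x y : EuclideanSpace ℝ (Fin 7)) (p : Δ) :
    cm7 (x + y) p = cm7 x p + cm7 y p := by
  simp [cm7, add_smul, Finset.sum_add_distrib]

lemma cm7_skew (x : EuclideanSpace ℝ (Fin 7)) (p q : Δ) :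
    ⟪cm7 x p, q⟫ = -⟪p, cm7 x q⟫ := by
  simp only [inner8, cm7_coord, Fin.sum_univ_eight]
  simp
  ring

lemma cm7_anti (x y : EuclideanSpace ℝ (Fin 7)) (p : Δ) :
    cm7 x (cm7 y p) = -cm7 y (cm7 x p) - (2 * ⟪x, y⟫) • p := by
  rw [inner7]
  ext i
  fin_cases i <;> simp [cm7_coord, Fin.sum_univ_seven] <;> ring

/-- Expansion of a spinor in the orthogonal basis φ, e₁φ, …, e₇φ. -/
lemma expand (p w : Δ) :
    ⟪p, p⟫ • w = ⟪w, p⟫ • p + ∑ k, ⟪w, cm7 (v7 k) p⟫ • cm7 (v7 k) p := by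
  simp only [inner8]
  ext i
  fin_cases i <;> simp [cm7_coord, Fin.sum_univ_seven, Fin.sum_univ_eight, v7] <;> ring

lemma cm7_eq_sum (x : EuclideanSpace ℝ (Fin 7)) (p : Δ) :
    cm7 x p = ∑ k, ⟪x, v7 k⟫ • cm7 (v7 k) p := by
  simp only [inner7]
  ext i
  fin_cases i <;> simp [cm7_coord, Fin.sum_univ_seven, v7] <;> ring

lemma cm7_cross (p : Δ) (hp : ⟪p, p⟫ = 1) (x y c : EuclideanSpace ℝ (Fin 7))
    (hc : ∀ z, ⟪c, z⟫ = PhiP p x y z) :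
    cm7 c p = cm7 y (cm7 x p) + ⟪x, y⟫ • p := by
  have h := expand p (cm7 y (cm7 x p))
  have h1 : ∀ z, PhiP p x y z = ⟪cm7 y (cm7 x p), cm7 z p⟫ := by
    intro z
    rw [PhiP, cm7_skew, cm7_skew, neg_neg, real_inner_comm]
  have h2 : ⟪cm7 y (cm7 x p), p⟫ = -⟪x, y⟫ := by
    have a := cm7_anti x y p
    have b := congrArg (fun w => ⟪w, p⟫) a
    simp only [inner_sub_left, inner_neg_left, real_inner_smul_left, hp] at b
    have c1 : ⟪cm7 x (cm7 y p), p⟫ = ⟪cm7 y (cm7 x p), p⟫ := by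
      rw [cm7_skew, cm7_skew, neg_neg, real_inner_comm]
    linarith
  rw [hp, one_smul, h2] at h
  rw [cm7_eq_sum c p, h]
  simp only [hc, h1]
  module

/-- Pointwise form of the W₂ row of the G₂ classification theorem: if S is
skew-adjoint and a derivation of the cross product (so S ∈ g₂), then
ν(x×y) = y·ν(x) - x·ν(y) + 2⟨y, S(x)⟩·φ, where ν(x) := S(x)·φ. -/
theorem W2_row (φ : Δ) (hφ : ⟪φ, φ⟫ = 1)
    (cross : EuclideanSpace ℝ (Fin 7) → EuclideanSpace ℝ (Fin 7) →
      EuclideanSpace ℝ (Fin 7))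
    (hcross : ∀ x y z : EuclideanSpace ℝ (Fin 7), ⟪cross x y, z⟫ = PhiP φ x y z)
    (S : EuclideanSpace ℝ (Fin 7) →ₗ[ℝ] EuclideanSpace ℝ (Fin 7))
    (hskew : ∀ x y : EuclideanSpace ℝ (Fin 7), ⟪S x, y⟫ = -⟪x, S y⟫)
    (hder : ∀ x y : EuclideanSpace ℝ (Fin 7),
      S (cross x y) = cross (S x) y + cross x (S y)) :
    ∀ x y : EuclideanSpace ℝ (Fin 7),
      cm7 (S (cross x y)) φ =
        cm7 y (cm7 (S x) φ) - cm7 x (cm7 (S y) φ) + (2 * ⟪y, S x⟫) • φ := by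
  intro x y
  rw [hder, cm7_add, cm7_cross φ hφ _ _ _ (hcross (S x) y),
    cm7_cross φ hφ _ _ _ (hcross x (S y)), cm7_anti (S y) x, hskew x y,
    real_inner_comm (S y) x, real_inner_comm (S x) y, hskew x y, real_inner_comm (S y) x]
  module


end
end
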